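/- arXiv:2108.09103 — 5 statements merged into one kernel-verified Lean document; each statement's English description precedes it below -/
import Mathlib

section
/- Let μ_1, …, μ_M be vectors in a real inner-product space, and on a probability space let X_1, …, X_M be random vectors with E[X_m] = μ_m and E‖X_m − μ_m‖² ≤ σ², and let B_1, …, B_M be {0,1}-valued Bernoulli variables with P(B_m = 1) = p, such that the pairs (X_m, B_m) are mutually independent across m and each B_m is independent of X_m. Let α_1, …, α_M ∈ [0,1] with Σ_m α_m = 1. Then E‖Σ_{m=1}^{M} α_m B_m X_m‖² ≤ p σ² Σ_{m=1}^{M} α_m² + Σ_{m=1}^{M} α_m · p·(p + α_m (1 − p)) · ‖μ_m‖². -/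
open MeasureTheory ProbabilityTheory

/-!
Each summand `B m • X m` has mean `p • μs m`, and the second moment of the weighted sum splits into
its total variance and the squared norm of its mean. The total variance is additive over pairwise
independent summands, and that of `B m • X m` is `E[B m ^ 2]` times the total variance of `X m` plus
`Var[B m]` times `‖μs m‖ ^ 2`. The squared norm of the mean is bounded by Cauchy–Schwarz against
the weights.
-/

lemma norm_sum_smul_sq_le_sum_mul_norm_sq {ι E : Type*} [SeminormedAddCommGroup E]
    [NormedSpace ℝ E] {s : Finset ι} {w : ι → ℝ} (hw : ∀ i ∈ s, 0 ≤ w i) (hsum : ∑ i ∈ s, w i ≤ 1)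
    (v : ι → E) : ‖∑ i ∈ s, w i • v i‖ ^ 2 ≤ ∑ i ∈ s, w i * ‖v i‖ ^ 2 := by
  have hnonneg : ∀ i ∈ s, 0 ≤ w i * ‖v i‖ ^ 2 := fun i hi => mul_nonneg (hw i hi) (sq_nonneg _)
  calc ‖∑ i ∈ s, w i • v i‖ ^ 2
      ≤ (∑ i ∈ s, ‖w i • v i‖) ^ 2 := by gcongr; exact norm_sum_le _ _
    _ ≤ (∑ i ∈ s, w i) * ∑ i ∈ s, w i * ‖v i‖ ^ 2 := by
      refine Finset.sum_sq_le_sum_mul_sum_of_sq_le_mul s hw hnonneg fun i _ => le_of_eq ?_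
      rw [norm_smul, mul_pow, Real.norm_eq_abs, sq_abs]
      ring
    _ ≤ ∑ i ∈ s, w i * ‖v i‖ ^ 2 := mul_le_of_le_one_left (Finset.sum_nonneg hnonneg) hsum

section TotalVariance

variable {Ω : Type*} {mΩ : MeasurableSpace Ω} {μ : Measure Ω}

lemma integrable_inner_of_memLp_two {𝕜 E : Type*} [RCLike 𝕜] [NormedAddCommGroup E]
    [InnerProductSpace 𝕜 E] {X Y : Ω → E} (hX : MemLp X 2 μ) (hY : MemLp Y 2 μ) :
    Integrable (fun ω => inner 𝕜 (X ω) (Y ω)) μ :=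
  (hX.norm.integrable_mul hY.norm).mono' (hX.1.inner hY.1) <| .of_forall fun _ =>
    norm_inner_le_norm _ _

lemma memLp_two_smul_of_indepFun {𝕜 E : Type*} [NormedField 𝕜] [MeasurableSpace 𝕜]
    [OpensMeasurableSpace 𝕜] [NormedAddCommGroup E] [NormedSpace 𝕜 E] [MeasurableSpace E]
    [OpensMeasurableSpace E] {B : Ω → 𝕜} {X : Ω → E} (hB : MemLp B 2 μ) (hX : MemLp X 2 μ)
    (hBX : IndepFun B X μ) : MemLp (fun ω => B ω • X ω) 2 μ := by
  have hindep : IndepFun (fun ω => ‖B ω‖ ^ 2) (fun ω => ‖X ω‖ ^ 2) μ :=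
    hBX.comp (measurable_norm.pow_const 2) (measurable_norm.pow_const 2)
  refine (memLp_two_iff_integrable_sq_norm (hB.1.smul hX.1)).mpr ?_
  simp only [Pi.smul_apply', norm_smul, mul_pow]
  exact hindep.integrable_mul (hB.integrable_norm_pow two_ne_zero)
    (hX.integrable_norm_pow two_ne_zero)

variable {H : Type*} [NormedAddCommGroup H] [InnerProductSpace ℝ H]

lemma integral_norm_sum_sq_of_pairwise_integral_inner_eq_zero {ι : Type*} {s : Finset ι}
    {X : ι → Ω → H} (hX : ∀ i ∈ s, MemLp (X i) 2 μ)
    (horth : (s : Set ι).Pairwise fun i j => ∫ ω, inner ℝ (X i ω) (X j ω) ∂μ = 0) :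
    ∫ ω, ‖∑ i ∈ s, X i ω‖ ^ 2 ∂μ = ∑ i ∈ s, ∫ ω, ‖X i ω‖ ^ 2 ∂μ := by
  have hint : ∀ i ∈ s, ∀ j ∈ s, Integrable (fun ω => inner ℝ (X i ω) (X j ω)) μ :=
    fun i hi j hj => integrable_inner_of_memLp_two (hX i hi) (hX j hj)
  calc ∫ ω, ‖∑ i ∈ s, X i ω‖ ^ 2 ∂μ
      = ∫ ω, ∑ i ∈ s, ∑ j ∈ s, inner ℝ (X i ω) (X j ω) ∂μ := by
        simp only [← real_inner_self_eq_norm_sq, sum_inner]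
        simp only [inner_sum]
    _ = ∑ i ∈ s, ∑ j ∈ s, ∫ ω, inner ℝ (X i ω) (X j ω) ∂μ := by
        rw [integral_finsetSum _ fun i hi => integrable_finsetSum _ (hint i hi)]
        exact Finset.sum_congr rfl fun i hi => integral_finsetSum _ (hint i hi)
    _ = ∑ i ∈ s, ∫ ω, ‖X i ω‖ ^ 2 ∂μ := by
        refine Finset.sum_congr rfl fun i hi => ?_
        rw [Finset.sum_eq_single_of_mem i hi fun j hj hji => horth hi hj hji.symm]
        simp only [real_inner_self_eq_norm_sq]

/-- The total variance `E‖X - E X‖²` of a random vector, i.e. the trace of its covariance operator.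
As with `∫`, it is only meaningful for square-integrable `X`. -/
noncomputable def totalVariance {E : Type*} [NormedAddCommGroup E] [NormedSpace ℝ E]
    (X : Ω → E) (μ : Measure Ω) : ℝ :=
  ∫ ω, ‖X ω - ∫ ω', X ω' ∂μ‖ ^ 2 ∂μ

lemma totalVariance_const_smul {E : Type*} [NormedAddCommGroup E] [NormedSpace ℝ E]
    (c : ℝ) (X : Ω → E) :
    totalVariance (fun ω => c • X ω) μ = c ^ 2 * totalVariance X μ := by
  simp only [totalVariance, integral_smul, ← smul_sub, norm_smul, mul_pow, Real.norm_eq_abs, sq_abs,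
    integral_const_mul]

lemma totalVariance_eq_sub [CompleteSpace H] [IsProbabilityMeasure μ] {X : Ω → H}
    (hX : MemLp X 2 μ) :
    totalVariance X μ = ∫ ω, ‖X ω‖ ^ 2 ∂μ - ‖∫ ω, X ω ∂μ‖ ^ 2 := by
  set m := ∫ ω, X ω ∂μ with hm
  have hXint : Integrable X μ := hX.integrable one_le_two
  have hsq : Integrable (fun ω => ‖X ω‖ ^ 2) μ := hX.integrable_norm_pow two_ne_zero
  have hinner : Integrable (fun ω => 2 * inner ℝ m (X ω)) μ := (hXint.const_inner m).const_mul 2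
  have hdiff : Integrable (fun ω => ‖X ω‖ ^ 2 - 2 * inner ℝ m (X ω)) μ := hsq.sub hinner
  calc totalVariance X μ
      = ∫ ω, (‖X ω‖ ^ 2 - 2 * inner ℝ m (X ω) + ‖m‖ ^ 2) ∂μ := by
        simp only [totalVariance, ← hm, norm_sub_sq_real, real_inner_comm]
    _ = ∫ ω, ‖X ω‖ ^ 2 ∂μ - 2 * inner ℝ m m + ‖m‖ ^ 2 := by
        rw [integral_add hdiff (integrable_const _), integral_sub hsq hinner,
          integral_const_mul, integral_inner hXint, ← hm, integral_const, probReal_univ, one_smul]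
    _ = ∫ ω, ‖X ω‖ ^ 2 ∂μ - ‖m‖ ^ 2 := by
        rw [real_inner_self_eq_norm_sq]
        ring

variable [CompleteSpace H] [MeasurableSpace H] [BorelSpace H] [IsProbabilityMeasure μ]

lemma totalVariance_sum_of_pairwise_indepFun {ι : Type*} {s : Finset ι} {X : ι → Ω → H}
    (hX : ∀ i ∈ s, MemLp (X i) 2 μ)
    (hindep : (s : Set ι).Pairwise fun i j => IndepFun (X i) (X j) μ) :
    totalVariance (fun ω => ∑ i ∈ s, X i ω) μ = ∑ i ∈ s, totalVariance (X i) μ := by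
  have hint : ∀ i ∈ s, Integrable (X i) μ := fun i hi => (hX i hi).integrable one_le_two
  have hcentered : ∀ i ∈ s, MemLp (fun ω => X i ω - ∫ ω', X i ω' ∂μ) 2 μ :=
    fun i hi => (hX i hi).sub (memLp_const _)
  have hmean : ∀ i ∈ s, ∫ ω, (X i ω - ∫ ω', X i ω' ∂μ) ∂μ = 0 := fun i hi => by
    simp [integral_sub (hint i hi) (integrable_const _)]
  simp only [totalVariance, integral_finsetSum s hint, ← Finset.sum_sub_distrib]
  refine integral_norm_sum_sq_of_pairwise_integral_inner_eq_zero hcentered fun i hi j hj hij => ?_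
  have hcentered_indep :
      IndepFun (fun ω => X i ω - ∫ ω', X i ω' ∂μ) (fun ω => X j ω - ∫ ω', X j ω' ∂μ) μ :=
    (hindep hi hj hij).comp (measurable_sub_const _) (measurable_sub_const _)
  calc _ = inner ℝ (∫ ω, (X i ω - ∫ ω', X i ω' ∂μ) ∂μ) (∫ ω, (X j ω - ∫ ω', X j ω' ∂μ) ∂μ) :=
        hcentered_indep.integral_bilin ((hcentered i hi).integrable one_le_two)
          ((hcentered j hj).integrable one_le_two) (innerSL ℝ)
    _ = 0 := by rw [hmean i hi, inner_zero_left]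

lemma integral_norm_weighted_sum_sq_of_pairwise_indepFun {ι : Type*} {s : Finset ι}
    {X : ι → Ω → H} (w : ι → ℝ) (hX : ∀ i ∈ s, MemLp (X i) 2 μ)
    (hindep : (s : Set ι).Pairwise fun i j => IndepFun (X i) (X j) μ) :
    ∫ ω, ‖∑ i ∈ s, w i • X i ω‖ ^ 2 ∂μ =
      ∑ i ∈ s, w i ^ 2 * totalVariance (X i) μ + ‖∑ i ∈ s, w i • ∫ ω, X i ω ∂μ‖ ^ 2 := by
  have hwX : ∀ i ∈ s, MemLp (fun ω => w i • X i ω) 2 μ := fun i hi => (hX i hi).const_smul (w i)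
  have hsum : MemLp (fun ω => ∑ i ∈ s, w i • X i ω) 2 μ :=
    memLp_finsetSum (f := fun i ω => w i • X i ω) s hwX
  have hwindep : (s : Set ι).Pairwise fun i j =>
      IndepFun (fun ω => w i • X i ω) (fun ω => w j • X j ω) μ := fun i hi j hj hij =>
    (hindep hi hj hij).comp (measurable_const_smul (w i)) (measurable_const_smul (w j))
  have hmean : ∫ ω, ∑ i ∈ s, w i • X i ω ∂μ = ∑ i ∈ s, w i • ∫ ω, X i ω ∂μ := by
    rw [integral_finsetSum s fun i hi => (hwX i hi).integrable one_le_two]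
    simp only [integral_smul]
  have hvar := totalVariance_sum_of_pairwise_indepFun (X := fun i ω => w i • X i ω) hwX hwindep
  rw [totalVariance_eq_sub hsum, hmean] at hvar
  simp only [totalVariance_const_smul] at hvar
  exact sub_eq_iff_eq_add.mp hvar

section RandomScalar

variable {B : Ω → ℝ} {X : Ω → H}

lemma totalVariance_smul_of_indepFun (hB : MemLp B 2 μ) (hX : MemLp X 2 μ)
    (hBX : IndepFun B X μ) :
    totalVariance (fun ω => B ω • X ω) μ =
      (∫ ω, B ω ^ 2 ∂μ) * totalVariance X μ + Var[B; μ] * ‖∫ ω, X ω ∂μ‖ ^ 2 := by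
  have hindep : IndepFun (fun ω => B ω ^ 2) (fun ω => ‖X ω‖ ^ 2) μ :=
    hBX.comp (measurable_id.pow_const 2) (measurable_norm.pow_const 2)
  have hsq : ∫ ω, ‖B ω • X ω‖ ^ 2 ∂μ = (∫ ω, B ω ^ 2 ∂μ) * ∫ ω, ‖X ω‖ ^ 2 ∂μ := by
    simp only [norm_smul, mul_pow, Real.norm_eq_abs, sq_abs]
    exact hindep.integral_fun_mul_eq_mul_integral (hB.1.pow 2) (hX.1.norm.pow 2)
  rw [totalVariance_eq_sub (memLp_two_smul_of_indepFun hB hX hBX), hsq,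
    hBX.integral_fun_smul_eq_smul_integral hB.1 hX.1, norm_smul, mul_pow, Real.norm_eq_abs, sq_abs,
    totalVariance_eq_sub hX, variance_eq_sub hB]
  simp only [Pi.pow_apply]
  ring

lemma totalVariance_smul_le_of_mem_Icc (hBmeas : AEMeasurable B μ)
    (hB : ∀ᵐ ω ∂μ, B ω ∈ Set.Icc (0 : ℝ) 1) (hX : MemLp X 2 μ) (hBX : IndepFun B X μ) :
    totalVariance (fun ω => B ω • X ω) μ ≤
      μ[B] * totalVariance X μ + μ[B] * (1 - μ[B]) * ‖∫ ω, X ω ∂μ‖ ^ 2 := by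
  have hB2 : MemLp B 2 μ := memLp_of_bounded hB hBmeas.aestronglyMeasurable 2
  have hsq : ∫ ω, B ω ^ 2 ∂μ ≤ μ[B] :=
    integral_mono_ae hB2.integrable_sq (hB2.integrable one_le_two) <| hB.mono fun _ hω =>
      pow_le_of_le_one hω.1 hω.2 two_ne_zero
  have hvar : Var[B; μ] ≤ μ[B] * (1 - μ[B]) := by
    simpa [mul_comm] using variance_le_sub_mul_sub hB hBmeas
  have hnonneg : 0 ≤ totalVariance X μ := integral_nonneg fun _ => sq_nonneg _
  rw [totalVariance_smul_of_indepFun hB2 hX hBX]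
  gcongr

end RandomScalar

theorem weighted_bernoulli_sum_second_moment_general {ι : Type*} [Fintype ι]
    {X : ι → Ω → H} {B : ι → Ω → ℝ} {μs : ι → H} {σ p α : ι → ℝ}
    (hα0 : ∀ m, 0 ≤ α m) (hαsum : ∑ m, α m ≤ 1)
    (hXsq : ∀ m, MemLp (X m) 2 μ) (hXmean : ∀ m, ∫ ω, X m ω ∂μ = μs m)
    (hXvar : ∀ m, ∫ ω, ‖X m ω - μs m‖ ^ 2 ∂μ ≤ σ m ^ 2)
    (hB01 : ∀ m, ∀ᵐ ω ∂μ, B m ω ∈ Set.Icc (0 : ℝ) 1) (hBmeas : ∀ m, AEMeasurable (B m) μ)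
    (hBmean : ∀ m, ∫ ω, B m ω ∂μ = p m)
    (hpairs : Pairwise fun m n =>
      IndepFun (fun ω => (X m ω, B m ω)) (fun ω => (X n ω, B n ω)) μ)
    (hBX : ∀ m, IndepFun (B m) (X m) μ) :
    ∫ ω, ‖∑ m, α m • (B m ω • X m ω)‖ ^ 2 ∂μ ≤
      ∑ m, p m * σ m ^ 2 * α m ^ 2 +
        ∑ m, α m * (p m * (p m + α m * (1 - p m))) * ‖μs m‖ ^ 2 := by
  have hYsq (m : ι) : MemLp (fun ω => B m ω • X m ω) 2 μ :=
    memLp_two_smul_of_indepFun (memLp_of_bounded (hB01 m) (hBmeas m).aestronglyMeasurable 2)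
      (hXsq m) (hBX m)
  have hYmean (m : ι) : ∫ ω, B m ω • X m ω ∂μ = p m • μs m := by
    rw [(hBX m).integral_fun_smul_eq_smul_integral (hBmeas m).aestronglyMeasurable (hXsq m).1,
      hBmean, hXmean]
  have hYindep : Pairwise fun m n =>
      IndepFun (fun ω => B m ω • X m ω) (fun ω => B n ω • X n ω) μ := fun m n hmn =>
    (hpairs hmn).comp (measurable_snd.smul measurable_fst) (measurable_snd.smul measurable_fst)
  have hp0 (m : ι) : 0 ≤ p m :=
    hBmean m ▸ integral_nonneg_of_ae ((hB01 m).mono fun _ hω => hω.1)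
  have hYvar (m : ι) : totalVariance (fun ω => B m ω • X m ω) μ ≤
      p m * σ m ^ 2 + p m * (1 - p m) * ‖μs m‖ ^ 2 := by
    have hXtot : totalVariance (X m) μ ≤ σ m ^ 2 := by
      simpa only [totalVariance, hXmean] using hXvar m
    have hsmul := totalVariance_smul_le_of_mem_Icc (hBmeas m) (hB01 m) (hXsq m) (hBX m)
    rw [hBmean, hXmean] at hsmul
    exact hsmul.trans (by gcongr; exact hp0 m)
  calc ∫ ω, ‖∑ m, α m • (B m ω • X m ω)‖ ^ 2 ∂μ
      = ∑ m, α m ^ 2 * totalVariance (fun ω => B m ω • X m ω) μ +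
          ‖∑ m, α m • (p m • μs m)‖ ^ 2 := by
        simp only [integral_norm_weighted_sum_sq_of_pairwise_indepFun α (fun m _ => hYsq m)
          (hYindep.set_pairwise _), hYmean]
    _ ≤ ∑ m, α m ^ 2 * (p m * σ m ^ 2 + p m * (1 - p m) * ‖μs m‖ ^ 2) +
          ∑ m, α m * ‖p m • μs m‖ ^ 2 := by
        gcongr with m
        · exact hYvar m
        · exact norm_sum_smul_sq_le_sum_mul_norm_sq (fun m _ => hα0 m) hαsum _
    _ = _ := by
        simp only [norm_smul, mul_pow, Real.norm_eq_abs, sq_abs, ← Finset.sum_add_distrib]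
        exact Finset.sum_congr rfl fun m _ => by ring

end TotalVariance

/-- For independent pairs `(X_m, B_m)` with `E X_m = μs m`,
variance at most `σ²`, `B_m` Bernoulli(p) independent of `X_m`, and convex weights
`α_m`, one has `E‖Σ_m α_m B_m X_m‖² ≤ p σ² Σ α_m² + Σ_m α_m p (p + α_m (1−p)) ‖μs m‖²`. -/
theorem weighted_bernoulli_sum_second_moment
    {Ω : Type*} [MeasurableSpace Ω] {μ : Measure Ω} [IsProbabilityMeasure μ]
    {H : Type*} [NormedAddCommGroup H] [InnerProductSpace ℝ H] [CompleteSpace H]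
    [MeasurableSpace H] [BorelSpace H]
    {M : ℕ}
    (X : Fin M → Ω → H) (B : Fin M → Ω → ℝ) (μs : Fin M → H) (σ p : ℝ)
    (α : Fin M → ℝ)
    (hα01 : ∀ m, α m ∈ Set.Icc (0 : ℝ) 1)
    (hαsum : ∑ m, α m = 1)
    (hp0 : 0 ≤ p) (hp1 : p ≤ 1)
    (hXsq : ∀ m, MemLp (X m) 2 μ)
    (hXmean : ∀ m, ∫ ω, X m ω ∂μ = μs m)
    (hXvar : ∀ m, ∫ ω, ‖X m ω - μs m‖ ^ 2 ∂μ ≤ σ ^ 2)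
    (hB01 : ∀ m ω, B m ω = 0 ∨ B m ω = 1)
    (hBmeas : ∀ m, Measurable (B m))
    (hBp : ∀ m, μ {ω | B m ω = 1} = ENNReal.ofReal p)
    (hpairs : iIndepFun
      (fun m : Fin M => fun ω => (X m ω, B m ω)) μ)
    (hBX : ∀ m, IndepFun (B m) (X m) μ) :
    ∫ ω, ‖∑ m, α m • (B m ω • X m ω)‖ ^ 2 ∂μ ≤
      p * σ ^ 2 * ∑ m, (α m) ^ 2 +
        ∑ m, α m * (p * (p + α m * (1 - p))) * ‖μs m‖ ^ 2 := by
  have hBmean (m : Fin M) : ∫ ω, B m ω ∂μ = p := by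
    rw [integral_of_ae_eq_zero_or_one (hBmeas m).aemeasurable (.of_forall (hB01 m)),
      measureReal_def, hBp, ENNReal.toReal_ofReal hp0]
  have hBIcc (m : Fin M) : ∀ᵐ ω ∂μ, B m ω ∈ Set.Icc (0 : ℝ) 1 := .of_forall fun ω => by
    rcases hB01 m ω with h | h <;> simp [h]
  rw [Finset.mul_sum]
  exact weighted_bernoulli_sum_second_moment_general (fun m => (hα01 m).1) hαsum.le hXsq hXmean
    hXvar hBIcc (fun m => (hBmeas m).aemeasurable) hBmean
    (fun _ _ hmn => hpairs.indepFun hmn) hBX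
end

section
/- Consider M users and N clusters with a fixed assignment c(m) of user m to a cluster, cluster sets C_i = {m : c(m)=i}, aggregation weights α^c_m ∈ [0,1] with Σ_{m∈C_i} α^c_m = 1 for each i, α_{c_i} ∈ [0,1] with Σ_i α_{c_i} = 1, and α_m := α^c_m α_{c(m)}; differentiable losses F_m : ℝ^d → ℝ with L-Lipschitz gradients; f_{c_i} := Σ_{m∈C_i} α^c_m F_m and f := Σ_i α_{c_i} f_{c_i}; suppose for every w ∈ ℝ^d: Σ_{i=1}^{N} α_{c_i}‖∇f_{c_i}(w) − ∇f(w)‖² ≤ ε_g² and, for each i, Σ_{m∈C_i} α^c_m‖∇F_m(w) − ∇f_{c_i}(w)‖² ≤ ε_c². Then for every w ∈ ℝ^d, every family of points z_1, …, z_N ∈ ℝ^d, and every family y_1, …, y_M ∈ ℝ^d: Σ_{m=1}^{M} α_m‖∇f(w) − ∇F_m(y_m)‖² ≤ 4 L² Σ_{i=1}^{N} α_{c_i}‖w − z_i‖² + 4 ε_g² + 4 L² Σ_{m=1}^{M} α_m‖z_{c(m)} − y_m‖² + 4 ε_c². -/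
open Finset

/-!
Write `g m` for the gradient of `F m`, `h i` for that of the `i`-th cluster loss, `v` for `∇f(w)`.
The deviation `v - g m (y m)` is followed along the path `v`, `h (c m) w`, `h (c m) (z (c m))`,
`g m (z (c m))`, `g m (y m)`. The first and third legs are averaged by the two divergence bounds;
the other two are Lipschitz increments, since `h i`, a convex combination of the `g m`, inherits
their Lipschitz constant. The factor `4` is the convexity cost of squaring a sum of four lengths.
-/

open scoped NNReal ComplexConjugate

section LinearCombinations

variable {ι : Type*} {s : Finset ι}

lemma gradient_sum_const_mul {𝕜 H : Type*} [RCLike 𝕜] [NormedAddCommGroup H]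
    [InnerProductSpace 𝕜 H] [CompleteSpace H] {F : ι → H → 𝕜} {x : H}
    (a : ι → 𝕜) (hF : ∀ m ∈ s, DifferentiableAt 𝕜 (F m) x) :
    gradient (fun x' ↦ ∑ m ∈ s, a m * F m x') x = ∑ m ∈ s, conj (a m) • gradient (F m) x := by
  refine HasGradientAt.gradient ?_
  rw [hasGradientAt_iff_hasFDerivAt]
  simp only [map_sum, map_smulₛₗ, RCLike.conj_conj]
  exact HasFDerivAt.fun_sum fun m hm ↦ (hF m hm).hasGradientAt.hasFDerivAt.const_mul (a m)

lemma lipschitzWith_sum_smul {X E : Type*} [PseudoMetricSpace X] [SeminormedAddCommGroup E]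
    [NormedSpace ℝ E] {a : ι → ℝ} {g : ι → X → E} {K : ℝ≥0} (ha : ∀ m ∈ s, 0 ≤ a m)
    (ha_sum : ∑ m ∈ s, a m = 1) (hg : ∀ m ∈ s, LipschitzWith K (g m)) :
    LipschitzWith K (fun x ↦ ∑ m ∈ s, a m • g m x) := by
  refine LipschitzWith.of_dist_le_mul fun x x' ↦ ?_
  calc dist (∑ m ∈ s, a m • g m x) (∑ m ∈ s, a m • g m x')
      ≤ ∑ m ∈ s, a m * (K * dist x x') := dist_sum_sum_le_of_le s fun m hm ↦ by
        rw [dist_smul₀, Real.norm_of_nonneg (ha m hm)]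
        exact mul_le_mul_of_nonneg_left ((hg m hm).dist_le_mul x x') (ha m hm)
    _ = K * dist x x' := by rw [← sum_mul, ha_sum, one_mul]

end LinearCombinations

lemma sum_mul_comp_mul_eq_sum_fiberwise {ι κ R : Type*} [Fintype ι] [Fintype κ] [DecidableEq κ]
    [CommSemiring R] (c : ι → κ) (a : ι → R) (b : κ → R) (φ : κ → ι → R) :
    ∑ m, a m * b (c m) * φ (c m) m = ∑ i, b i * ∑ m with c m = i, a m * φ i m := by
  rw [← sum_fiberwise univ c]
  refine sum_congr rfl fun i _ ↦ ?_
  rw [mul_sum]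
  refine sum_congr rfl fun m hm ↦ ?_
  obtain rfl := (mem_filter.mp hm).2
  ring

section PathSplitting

variable {X Y : Type*} [PseudoMetricSpace X] [PseudoMetricSpace Y]

lemma sq_dist_le_two_mul_add (p q r : Y) :
    dist p r ^ 2 ≤ 2 * (dist p q ^ 2 + dist q r ^ 2) :=
  (pow_le_pow_left₀ dist_nonneg (dist_triangle p q r) 2).trans add_sq_le

lemma sq_dist_le_of_lipschitzWith {K : ℝ≥0} {g : X → Y} (hg : LipschitzWith K g) (x x' : X) :
    dist (g x) (g x') ^ 2 ≤ K ^ 2 * dist x x' ^ 2 := by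
  rw [← mul_pow]
  exact pow_le_pow_left₀ dist_nonneg (hg.dist_le_mul x x') 2

lemma sq_dist_apply_le_of_lipschitzWith {K K' : ℝ≥0} {h g : X → Y} (hh : LipschitzWith K h)
    (hg : LipschitzWith K' g) (v : Y) (w z y : X) :
    dist v (g y) ^ 2 ≤ 4 * (K ^ 2 * dist w z ^ 2 + dist (h w) v ^ 2 +
      K' ^ 2 * dist z y ^ 2 + dist (g z) (h z) ^ 2) := by
  have hmid := sq_dist_le_two_mul_add v (h z) (g y)
  have hfst := sq_dist_le_two_mul_add v (h w) (h z)
  have hsnd := sq_dist_le_two_mul_add (h z) (g z) (g y)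
  rw [dist_comm v (h w)] at hfst
  rw [dist_comm (h z) (g z)] at hsnd
  linarith [sq_dist_le_of_lipschitzWith hh w z, sq_dist_le_of_lipschitzWith hg z y]

end PathSplitting

theorem gradient_divergence_decomposition_general {ι κ X E : Type*} [Fintype ι] [Fintype κ]
    [DecidableEq κ] [PseudoMetricSpace X] [SeminormedAddCommGroup E] [NormedSpace ℝ E]
    {c : ι → κ} {a : ι → ℝ} {b : κ → ℝ} {g : ι → X → E} {h : κ → X → E} {K : ℝ≥0} {δ ε : ℝ}
    {v : E} {w : X} {z : κ → X}
    (ha : ∀ m, 0 ≤ a m) (ha_sum : ∀ i, ∑ m with c m = i, a m = 1)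
    (hb : ∀ i, 0 ≤ b i) (hb_sum : ∑ i, b i = 1)
    (hg : ∀ m, LipschitzWith K (g m)) (hh : ∀ i x, h i x = ∑ m with c m = i, a m • g m x)
    (hδ : ∑ i, b i * ‖h i w - v‖ ^ 2 ≤ δ)
    (hε : ∀ i, ∑ m with c m = i, a m * ‖g m (z i) - h i (z i)‖ ^ 2 ≤ ε) (y : ι → X) :
    ∑ m, a m * b (c m) * ‖v - g m (y m)‖ ^ 2 ≤
      4 * K ^ 2 * ∑ i, b i * dist w (z i) ^ 2 + 4 * δ +
        4 * K ^ 2 * ∑ m, a m * b (c m) * dist (z (c m)) (y m) ^ 2 + 4 * ε := by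
  have h_lip (i : κ) : LipschitzWith K (h i) := by
    rw [funext (hh i)]
    exact lipschitzWith_sum_smul (fun m _ ↦ ha m) (ha_sum i) fun m _ ↦ hg m
  have sum_comp (φ : κ → ℝ) : ∑ m, a m * b (c m) * φ (c m) = ∑ i, b i * φ i := by
    simp only [sum_mul_comp_mul_eq_sum_fiberwise c a b fun i _ ↦ φ i, ← sum_mul, ha_sum, one_mul]
  have within_cluster :
      ∑ m, a m * b (c m) * ‖g m (z (c m)) - h (c m) (z (c m))‖ ^ 2 ≤ ε := by
    rw [sum_mul_comp_mul_eq_sum_fiberwise c a b fun i m ↦ ‖g m (z i) - h i (z i)‖ ^ 2]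
    exact (convex_Iic ε).sum_mem (fun i _ ↦ hb i) hb_sum fun i _ ↦ hε i
  have deviation_le (m : ι) : ‖v - g m (y m)‖ ^ 2 ≤
      4 * (K ^ 2 * dist w (z (c m)) ^ 2 + ‖h (c m) w - v‖ ^ 2 +
        K ^ 2 * dist (z (c m)) (y m) ^ 2 + ‖g m (z (c m)) - h (c m) (z (c m))‖ ^ 2) := by
    simpa only [dist_eq_norm] using
      sq_dist_apply_le_of_lipschitzWith (h_lip (c m)) (hg m) v w (z (c m)) (y m)
  calc ∑ m, a m * b (c m) * ‖v - g m (y m)‖ ^ 2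
      ≤ ∑ m, a m * b (c m) * (4 * (K ^ 2 * dist w (z (c m)) ^ 2 + ‖h (c m) w - v‖ ^ 2 +
          K ^ 2 * dist (z (c m)) (y m) ^ 2 + ‖g m (z (c m)) - h (c m) (z (c m))‖ ^ 2)) :=
        sum_le_sum fun m _ ↦
          mul_le_mul_of_nonneg_left (deviation_le m) (mul_nonneg (ha m) (hb (c m)))
    _ = 4 * K ^ 2 * ∑ i, b i * dist w (z i) ^ 2 + 4 * ∑ i, b i * ‖h i w - v‖ ^ 2 +
          4 * K ^ 2 * ∑ m, a m * b (c m) * dist (z (c m)) (y m) ^ 2 +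
          4 * ∑ m, a m * b (c m) * ‖g m (z (c m)) - h (c m) (z (c m))‖ ^ 2 := by
        rw [← sum_comp fun i ↦ dist w (z i) ^ 2, ← sum_comp fun i ↦ ‖h i w - v‖ ^ 2]
        simp only [mul_sum, ← sum_add_distrib]
        exact sum_congr rfl fun m _ ↦ by ring
    _ ≤ _ := by gcongr

/-- Under bounded divergence of cluster/global gradients and
`L`-Lipschitz gradients, the weighted squared deviation between the global gradient at `w`
and the local gradients at arbitrary points `y m` is controlled by the weighted squared
distances through arbitrary anchor points `z i`. -/
theorem gradient_divergence_decomposition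
    {d M N : ℕ} (c : Fin M → Fin N)
    (αc : Fin M → ℝ) (αC : Fin N → ℝ) (α : Fin M → ℝ)
    (hαc01 : ∀ m, αc m ∈ Set.Icc (0 : ℝ) 1)
    (hαcsum : ∀ i, ∑ m ∈ univ.filter (fun m => c m = i), αc m = 1)
    (hαC01 : ∀ i, αC i ∈ Set.Icc (0 : ℝ) 1)
    (hαCsum : ∑ i, αC i = 1)
    (hα : ∀ m, α m = αc m * αC (c m))
    (F : Fin M → EuclideanSpace ℝ (Fin d) → ℝ)
    (fc : Fin N → EuclideanSpace ℝ (Fin d) → ℝ)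
    (f : EuclideanSpace ℝ (Fin d) → ℝ)
    (hFdiff : ∀ m, Differentiable ℝ (F m))
    (hfc : ∀ i x, fc i x = ∑ m ∈ univ.filter (fun m => c m = i), αc m * F m x)
    (hf : ∀ x, f x = ∑ i, αC i * fc i x)
    (L εg εc : ℝ) (hL : 0 < L)
    (hLip : ∀ m, LipschitzWith L.toNNReal (gradient (F m)))
    (hdivg : ∀ x, ∑ i, αC i * ‖gradient (fc i) x - gradient f x‖ ^ 2 ≤ εg ^ 2)
    (hdivc : ∀ i x, ∑ m ∈ univ.filter (fun m => c m = i),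
        αc m * ‖gradient (F m) x - gradient (fc i) x‖ ^ 2 ≤ εc ^ 2)
    (w : EuclideanSpace ℝ (Fin d)) (z : Fin N → EuclideanSpace ℝ (Fin d))
    (y : Fin M → EuclideanSpace ℝ (Fin d)) :
    ∑ m, α m * ‖gradient f w - gradient (F m) (y m)‖ ^ 2 ≤
      4 * L ^ 2 * ∑ i, αC i * ‖w - z i‖ ^ 2 + 4 * εg ^ 2 +
        4 * L ^ 2 * ∑ m, α m * ‖z (c m) - y m‖ ^ 2 + 4 * εc ^ 2 := by
  simpa only [hα, dist_eq_norm, Real.coe_toNNReal L hL.le] using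
    gradient_divergence_decomposition_general (fun m ↦ (hαc01 m).1) hαcsum (fun i ↦ (hαC01 i).1)
      hαCsum hLip (fun i x ↦ funext (hfc i) ▸ gradient_sum_const_mul αc fun m _ ↦ hFdiff m x)
      (hdivg w) (fun i ↦ hdivc i (z i)) y
end

section
/- Consider M users and N clusters with a fixed assignment c(m) of user m to a cluster, cluster sets C_i = {m : c(m)=i}, aggregation weights α^c_m ∈ [0,1] with Σ_{m∈C_i} α^c_m = 1 for each i, α_{c_i} ∈ [0,1] with Σ_i α_{c_i} = 1, and α_m := α^c_m α_{c(m)}. On a probability space let {Z_m^τ : 1 ≤ m ≤ M, 0 ≤ τ < κ} be a family of mutually independent square-integrable random vectors in ℝ^d with E[Z_m^τ] = 0 and E‖Z_m^τ‖² ≤ v for all m, τ. Then Σ_{i=1}^{N} α_{c_i} Σ_{m∈C_i} α^c_m · E‖ Σ_{τ=0}^{κ−1} ( Z_m^τ − Σ_{j∈C_i} α^c_j Z_j^τ ) ‖² ≤ κ · v · Σ_{m=1}^{M} α_m (1 − α^c_m). -/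
open MeasureTheory ProbabilityTheory Finset

/-!
In `L²(μ; E)` expectations of squared norms are squared norms, and independent centered vectors are
orthogonal. Within one cluster, put `S_m = Σ_τ Z_m^τ`. The bias-variance identity for the weights
`a_m` and Pythagoras give
`Σ_m a_m ‖S_m - Σ_j a_j S_j‖² = Σ_m a_m ‖S_m‖² - Σ_m a_m² ‖S_m‖² = Σ_m a_m (1 - a_m) ‖S_m‖²`,
and `‖S_m‖² = Σ_τ ‖Z_m^τ‖² ≤ κ v`, again by Pythagoras.
-/

section InnerProductSpace

variable {ι κ E : Type*} [NormedAddCommGroup E] [InnerProductSpace ℝ E]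
  {s : Finset ι} {t : Finset κ} {a : ι → ℝ} {x : ι → E}

lemma norm_sum_sq_of_pairwise_inner_eq_zero
    (hx : (s : Set ι).Pairwise fun i j => inner ℝ (x i) (x j) = 0) :
    ‖∑ i ∈ s, x i‖ ^ 2 = ∑ i ∈ s, ‖x i‖ ^ 2 := by
  rw [← real_inner_self_eq_norm_sq, sum_inner]
  refine sum_congr rfl fun i hi => ?_
  rw [inner_sum, sum_eq_single_of_mem i hi fun j hj hji => hx hi hj hji.symm,
    real_inner_self_eq_norm_sq]

lemma sum_mul_norm_sub_sum_smul_sq (ha : ∑ i ∈ s, a i = 1) :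
    ∑ i ∈ s, a i * ‖x i - ∑ j ∈ s, a j • x j‖ ^ 2 =
      ∑ i ∈ s, a i * ‖x i‖ ^ 2 - ‖∑ j ∈ s, a j • x j‖ ^ 2 := by
  set b := ∑ j ∈ s, a j • x j with hb
  have cross_term : ∑ i ∈ s, a i * inner ℝ (x i) b = ‖b‖ ^ 2 := by
    rw [← real_inner_self_eq_norm_sq]
    nth_rw 2 [hb]
    simp only [sum_inner, real_inner_smul_left]
  calc ∑ i ∈ s, a i * ‖x i - b‖ ^ 2
      = ∑ i ∈ s, (a i * ‖x i‖ ^ 2 - 2 * (a i * inner ℝ (x i) b) + a i * ‖b‖ ^ 2) :=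
        sum_congr rfl fun i _ => by rw [norm_sub_sq_real]; ring
    _ = ∑ i ∈ s, a i * ‖x i‖ ^ 2 - 2 * ‖b‖ ^ 2 + 1 * ‖b‖ ^ 2 := by
        rw [sum_add_distrib, sum_sub_distrib, ← mul_sum, ← sum_mul, ha, cross_term]
    _ = ∑ i ∈ s, a i * ‖x i‖ ^ 2 - ‖b‖ ^ 2 := by ring

lemma sum_mul_norm_sub_sum_smul_sq_of_pairwise_inner_eq_zero (ha : ∑ i ∈ s, a i = 1)
    (hx : (s : Set ι).Pairwise fun i j => inner ℝ (x i) (x j) = 0) :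
    ∑ i ∈ s, a i * ‖x i - ∑ j ∈ s, a j • x j‖ ^ 2 = ∑ i ∈ s, a i * (1 - a i) * ‖x i‖ ^ 2 := by
  have hax : (s : Set ι).Pairwise fun i j => inner ℝ (a i • x i) (a j • x j) = 0 :=
    fun i hi j hj hij => by
      simp only [real_inner_smul_left, real_inner_smul_right, hx hi hj hij, mul_zero]
  rw [sum_mul_norm_sub_sum_smul_sq ha, norm_sum_sq_of_pairwise_inner_eq_zero hax,
    ← sum_sub_distrib]
  refine sum_congr rfl fun i _ => ?_
  rw [norm_smul, mul_pow, Real.norm_eq_abs, sq_abs]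
  ring

lemma sum_mul_norm_sub_sum_smul_sq_le_of_pairwise_inner_eq_zero {B : ℝ}
    (ha₀ : ∀ i ∈ s, 0 ≤ a i) (ha : ∑ i ∈ s, a i = 1)
    (hx : (s : Set ι).Pairwise fun i j => inner ℝ (x i) (x j) = 0)
    (hB : ∀ i ∈ s, ‖x i‖ ^ 2 ≤ B) :
    ∑ i ∈ s, a i * ‖x i - ∑ j ∈ s, a j • x j‖ ^ 2 ≤ B * ∑ i ∈ s, a i * (1 - a i) := by
  rw [sum_mul_norm_sub_sum_smul_sq_of_pairwise_inner_eq_zero ha hx, mul_comm B, sum_mul]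
  refine sum_le_sum fun i hi => mul_le_mul_of_nonneg_left (hB i hi) ?_
  have ha₁ : a i ≤ 1 := ha ▸ single_le_sum ha₀ hi
  exact mul_nonneg (ha₀ i hi) (sub_nonneg.2 ha₁)

lemma sum_mul_norm_sum_sub_sum_smul_sq_le {z : ι → κ → E} {v : ℝ}
    (ha₀ : ∀ i ∈ s, 0 ≤ a i) (ha : ∑ i ∈ s, a i = 1)
    (hz : ((s ×ˢ t : Finset (ι × κ)) : Set (ι × κ)).Pairwise
      fun p q => inner ℝ (z p.1 p.2) (z q.1 q.2) = 0)
    (hv : ∀ i ∈ s, ∀ k ∈ t, ‖z i k‖ ^ 2 ≤ v) :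
    ∑ i ∈ s, a i * ‖∑ k ∈ t, (z i k - ∑ j ∈ s, a j • z j k)‖ ^ 2 ≤
      #t * v * ∑ i ∈ s, a i * (1 - a i) := by
  have sum_deviation (i : ι) : ∑ k ∈ t, (z i k - ∑ j ∈ s, a j • z j k) =
      ∑ k ∈ t, z i k - ∑ j ∈ s, a j • ∑ k ∈ t, z j k := by
    rw [sum_sub_distrib, sum_comm]
    simp only [smul_sum]
  have inner_eq_zero {i j : ι} (hi : i ∈ s) (hj : j ∈ s) {k l : κ} (hk : k ∈ t) (hl : l ∈ t)
      (hne : (i, k) ≠ (j, l)) : inner ℝ (z i k) (z j l) = 0 :=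
    hz (mem_product.2 ⟨hi, hk⟩) (mem_product.2 ⟨hj, hl⟩) hne
  simp only [sum_deviation]
  refine sum_mul_norm_sub_sum_smul_sq_le_of_pairwise_inner_eq_zero ha₀ ha ?_ fun i hi => ?_
  · intro i hi j hj hij
    simp only [sum_inner, inner_sum]
    exact sum_eq_zero fun k hk => sum_eq_zero fun l hl =>
      inner_eq_zero hi hj hl hk (ne_of_apply_ne Prod.fst hij)
  · have hzi : (t : Set κ).Pairwise fun k l => inner ℝ (z i k) (z i l) = 0 :=
      fun k hk l hl hkl => inner_eq_zero hi hi hk hl (ne_of_apply_ne Prod.snd hkl)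
    calc ‖∑ k ∈ t, z i k‖ ^ 2 = ∑ k ∈ t, ‖z i k‖ ^ 2 := norm_sum_sq_of_pairwise_inner_eq_zero hzi
      _ ≤ #t • v := sum_le_card_nsmul t _ v (hv i hi)
      _ = #t * v := nsmul_eq_mul _ _

end InnerProductSpace

section Integral

variable {ι κ Ω E : Type*} [MeasurableSpace Ω] {μ : Measure Ω} [NormedAddCommGroup E]

lemma toLp_finsetSum {p : ENNReal} (s : Finset ι) {f : ι → Ω → E} (hf : ∀ i, MemLp (f i) p μ) :
    (memLp_finsetSum s fun i _ => hf i).toLp (fun ω => ∑ i ∈ s, f i ω) =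
      ∑ i ∈ s, (hf i).toLp (f i) := by
  refine Lp.ext ?_
  filter_upwards [(memLp_finsetSum s fun i _ => hf i).coeFn_toLp,
    Lp.coeFn_finsetSum s fun i => (hf i).toLp (f i),
    (s.eventually_all).2 fun i _ => (hf i).coeFn_toLp] with ω hsum hcoe hf_eq
  rw [hsum, hcoe, Finset.sum_apply]
  exact sum_congr rfl fun i hi => (hf_eq i hi).symm

lemma inner_toLp_toLp {𝕜 : Type*} [RCLike 𝕜] [InnerProductSpace 𝕜 E] {f g : Ω → E}
    (hf : MemLp f 2 μ) (hg : MemLp g 2 μ) :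
    inner 𝕜 (hf.toLp f) (hg.toLp g) = ∫ ω, inner 𝕜 (f ω) (g ω) ∂μ := by
  rw [L2.inner_def]
  refine integral_congr_ae ?_
  filter_upwards [hf.coeFn_toLp, hg.coeFn_toLp] with ω hfω hgω
  rw [hfω, hgω]

variable [InnerProductSpace ℝ E]

lemma norm_toLp_sq {f : Ω → E} (hf : MemLp f 2 μ) :
    ‖hf.toLp f‖ ^ 2 = ∫ ω, ‖f ω‖ ^ 2 ∂μ := by
  simp only [← real_inner_self_eq_norm_sq, inner_toLp_toLp]

lemma sum_mul_integral_norm_sum_sub_sum_smul_sq_le {s : Finset ι} {t : Finset κ} {a : ι → ℝ}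
    {Z : ι → κ → Ω → E} {v : ℝ} (ha₀ : ∀ i ∈ s, 0 ≤ a i) (ha : ∑ i ∈ s, a i = 1)
    (hZ : ∀ i k, MemLp (Z i k) 2 μ)
    (horth : ((s ×ˢ t : Finset (ι × κ)) : Set (ι × κ)).Pairwise
      fun p q => ∫ ω, inner ℝ (Z p.1 p.2 ω) (Z q.1 q.2 ω) ∂μ = 0)
    (hv : ∀ i ∈ s, ∀ k ∈ t, ∫ ω, ‖Z i k ω‖ ^ 2 ∂μ ≤ v) :
    ∑ i ∈ s, a i * ∫ ω, ‖∑ k ∈ t, (Z i k ω - ∑ j ∈ s, a j • Z j k ω)‖ ^ 2 ∂μ ≤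
      #t * v * ∑ i ∈ s, a i * (1 - a i) := by
  let z (i : ι) (k : κ) : Lp E 2 μ := (hZ i k).toLp (Z i k)
  have hmean (k : κ) : MemLp (fun ω => ∑ j ∈ s, a j • Z j k ω) 2 μ :=
    memLp_finsetSum s fun j _ => (hZ j k).const_smul (a j)
  have hdev (i : ι) (k : κ) : MemLp (fun ω => Z i k ω - ∑ j ∈ s, a j • Z j k ω) 2 μ :=
    (hZ i k).sub (hmean k)
  have toLp_mean (k : κ) : (hmean k).toLp _ = ∑ j ∈ s, a j • z j k :=
    toLp_finsetSum s fun j => (hZ j k).const_smul (a j)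
  have toLp_dev (i : ι) (k : κ) : (hdev i k).toLp _ = z i k - ∑ j ∈ s, a j • z j k := by
    rw [← toLp_mean]
    exact MemLp.toLp_sub (hZ i k) (hmean k)
  have integral_eq (i : ι) :
      ∫ ω, ‖∑ k ∈ t, (Z i k ω - ∑ j ∈ s, a j • Z j k ω)‖ ^ 2 ∂μ =
        ‖∑ k ∈ t, (z i k - ∑ j ∈ s, a j • z j k)‖ ^ 2 := by
    have hsum : MemLp (fun ω => ∑ k ∈ t, (Z i k ω - ∑ j ∈ s, a j • Z j k ω)) 2 μ :=
      memLp_finsetSum t fun k _ => hdev i k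
    rw [← norm_toLp_sq hsum, toLp_finsetSum t (hdev i)]
    simp only [toLp_dev]
  simp only [integral_eq]
  refine sum_mul_norm_sum_sub_sum_smul_sq_le ha₀ ha ?_ fun i hi k hk => ?_
  · exact fun p hp q hq hpq => (inner_toLp_toLp _ _).trans (horth hp hq hpq)
  · exact (norm_toLp_sq _).trans_le (hv i hi k hk)

lemma integral_inner_eq_zero_of_indepFun [CompleteSpace E] [MeasurableSpace E] [BorelSpace E]
    {X Y : Ω → E} (hXY : IndepFun X Y μ) (hX : Integrable X μ) (hY : Integrable Y μ)
    (hX₀ : ∫ ω, X ω ∂μ = 0) : ∫ ω, inner ℝ (X ω) (Y ω) ∂μ = 0 := by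
  calc ∫ ω, inner ℝ (X ω) (Y ω) ∂μ = inner ℝ (∫ ω, X ω ∂μ) (∫ ω, Y ω ∂μ) :=
        hXY.integral_bilin hX hY (innerSL ℝ)
    _ = 0 := by rw [hX₀, inner_zero_left]

end Integral

theorem centered_sum_cluster_deviation_bound_general
    {U K T Ω E : Type*} [Fintype U] [Fintype K] [DecidableEq K] [Fintype T]
    [NormedAddCommGroup E] [InnerProductSpace ℝ E] [MeasurableSpace Ω] {μ : Measure Ω}
    (c : U → K) (αc : U → ℝ) (αC : K → ℝ) (α : U → ℝ)
    (hαc : ∀ m, 0 ≤ αc m) (hαcsum : ∀ i, ∑ m ∈ univ.filter (fun m => c m = i), αc m = 1)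
    (hαC : ∀ i, 0 ≤ αC i) (hα : ∀ m, α m = αc m * αC (c m))
    (Z : U → T → Ω → E) (v : ℝ) (hZsq : ∀ m τ, MemLp (Z m τ) 2 μ)
    (hZvar : ∀ m τ, ∫ ω, ‖Z m τ ω‖ ^ 2 ∂μ ≤ v)
    (horth : ∀ p q : U × T, p ≠ q → c p.1 = c q.1 →
      ∫ ω, inner ℝ (Z p.1 p.2 ω) (Z q.1 q.2 ω) ∂μ = 0) :
    ∑ i, αC i * ∑ m ∈ univ.filter (fun m => c m = i), αc m *
        ∫ ω, ‖∑ τ, (Z m τ ω -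
          ∑ j ∈ univ.filter (fun j => c j = i), αc j • Z j τ ω)‖ ^ 2 ∂μ ≤
      Fintype.card T * v * ∑ m, α m * (1 - αc m) := by
  have cluster_bound (i : K) := sum_mul_integral_norm_sum_sub_sum_smul_sq_le (t := univ)
    (fun m _ => hαc m) (hαcsum i) hZsq
    (fun p hp q hq hpq => horth p q hpq <| by
      rw [(mem_filter.1 (mem_product.1 hp).1).2, (mem_filter.1 (mem_product.1 hq).1).2])
    (fun m _ τ _ => hZvar m τ)
  calc _ ≤ ∑ i, αC i * (Fintype.card T * v *
          ∑ m ∈ univ.filter (fun m => c m = i), αc m * (1 - αc m)) :=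
        sum_le_sum fun i _ => mul_le_mul_of_nonneg_left (cluster_bound i) (hαC i)
    _ = Fintype.card T * v *
          ∑ i, ∑ m ∈ univ.filter (fun m => c m = i), α m * (1 - αc m) := by
        simp only [mul_sum]
        refine sum_congr rfl fun i _ => sum_congr rfl fun m hm => ?_
        rw [hα, (mem_filter.1 hm).2]
        ring
    _ = Fintype.card T * v * ∑ m, α m * (1 - αc m) := by rw [sum_fiberwise]

/-- For a mutually independent, centered family `Z m τ` with second
moments at most `v`, the weighted mean-square deviation of the `κ`-step sums from their
cluster averages is at most `κ v Σ_m α_m (1 − α^c_m)`. -/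
theorem centered_sum_cluster_deviation_bound
    {d M N κ : ℕ} (hκ : 1 ≤ κ) (c : Fin M → Fin N)
    (αc : Fin M → ℝ) (αC : Fin N → ℝ) (α : Fin M → ℝ)
    (hαc01 : ∀ m, αc m ∈ Set.Icc (0 : ℝ) 1)
    (hαcsum : ∀ i, ∑ m ∈ univ.filter (fun m => c m = i), αc m = 1)
    (hαC01 : ∀ i, αC i ∈ Set.Icc (0 : ℝ) 1)
    (hαCsum : ∑ i, αC i = 1)
    (hα : ∀ m, α m = αc m * αC (c m))
    {Ω : Type*} [MeasurableSpace Ω] {μ : Measure Ω} [IsProbabilityMeasure μ]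
    (Z : Fin M → Fin κ → Ω → EuclideanSpace ℝ (Fin d))
    (v : ℝ)
    (hZmeas : ∀ m τ, Measurable (Z m τ))
    (hZsq : ∀ m τ, MemLp (Z m τ) 2 μ)
    (hZmean : ∀ m τ, ∫ ω, Z m τ ω ∂μ = 0)
    (hZvar : ∀ m τ, ∫ ω, ‖Z m τ ω‖ ^ 2 ∂μ ≤ v)
    (hindep : iIndepFun
      (fun p : Fin M × Fin κ => Z p.1 p.2) μ) :
    ∑ i, αC i * ∑ m ∈ univ.filter (fun m => c m = i), αc m *
        ∫ ω, ‖∑ τ, (Z m τ ω -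
          ∑ j ∈ univ.filter (fun j => c j = i), αc j • Z j τ ω)‖ ^ 2 ∂μ ≤
      (κ : ℝ) * v * ∑ m, α m * (1 - αc m) := by
  have hZint (p : Fin M × Fin κ) := (hZsq p.1 p.2).integrable one_le_two
  simpa only [Fintype.card_fin] using centered_sum_cluster_deviation_bound_general c αc αC α
    (fun m => (hαc01 m).1) hαcsum (fun i => (hαC01 i).1) hα Z v hZsq hZvar fun p q hpq _ =>
      integral_inner_eq_zero_of_indepFun (hindep.indepFun hpq) (hZint p) (hZint q) (hZmean _ _)
end

section
/- Consider M users and N clusters with a fixed assignment c(m) of user m to a cluster, cluster sets C_i = {m : c(m)=i}, weights α^c_m ∈ [0,1] with Σ_{m∈C_i} α^c_m = 1 for each i, α_{c_i} ∈ [0,1] with Σ_i α_{c_i} = 1, and α_m := α^c_m α_{c(m)}. Let μ_m^τ ∈ ℝ^d with ‖μ_m^τ‖ ≤ G, and on a probability space let X_m^τ be random vectors with E[X_m^τ] = μ_m^τ and E‖X_m^τ − μ_m^τ‖² ≤ σ², and B_m^τ be {0,1}-valued Bernoulli variables with P(B_m^τ = 1) = p, with the pairs (X_m^τ, B_m^τ)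 mutually independent over all (m, τ) and each B_m^τ independent of X_m^τ. Then for any integer κ ≥ 1: Σ_{i=1}^{N} α_{c_i} · E‖ Σ_{τ=0}^{κ−1} ( Σ_{m∈C_i} α^c_m (B_m^τ X_m^τ − p μ_m^τ) − Σ_{m=1}^{M} α_m (B_m^τ X_m^τ − p μ_m^τ) ) ‖² ≤ κ · p (σ² + (1 − p) G²) · Σ_{m=1}^{M} α_m (α^c_m − α_m). -/
open MeasureTheory ProbabilityTheory Finset

/-!
Write `Y m τ = B m τ • X m τ - p • μs m τ`. These noise terms are centered and independent, hence
orthogonal in `L²`, so the squared norm of any linear combination of them integrates to the weighted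
sum of their variances. The cluster-minus-global sum gives `Y m τ` the coefficient
`w i m = 1[c m = i] αc m - α m`; averaging its square over the clusters gives exactly
`∑ i, αC i * w i m ^ 2 = α m * (αc m - α m)`. Finally
`E‖Y m τ‖² = E[B²] E‖X‖² - p² ‖E X‖² ≤ p (E‖X - E X‖² + (1 - p) ‖E X‖²)`, since `B² ≤ B`.
-/

section SecondMoments

variable {Ω E : Type*} [MeasurableSpace Ω] {μ : Measure Ω}
  [NormedAddCommGroup E] [InnerProductSpace ℝ E]

lemma integral_norm_sq_sum_of_pairwise_orthogonal {ι : Type*} {s : Finset ι} {Y : ι → Ω → E}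
    (hY : ∀ q ∈ s, MemLp (Y q) 2 μ)
    (horth : (s : Set ι).Pairwise fun q r ↦ ∫ ω, inner ℝ (Y q ω) (Y r ω) ∂μ = 0) :
    ∫ ω, ‖∑ q ∈ s, Y q ω‖ ^ 2 ∂μ = ∑ q ∈ s, ∫ ω, ‖Y q ω‖ ^ 2 ∂μ := by
  have hint : ∀ q ∈ s, ∀ r ∈ s, Integrable (fun ω ↦ inner ℝ (Y q ω) (Y r ω)) μ :=
    fun q hq r hr ↦ memLp_one_iff_integrable.1 <|
      (innerSL ℝ).memLp_of_bilin 1 (hY q hq) (hY r hr)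
  simp_rw [← real_inner_self_eq_norm_sq, sum_inner, inner_sum]
  rw [integral_finsetSum _ fun q hq ↦ integrable_finsetSum _ (hint q hq)]
  refine sum_congr rfl fun q hq ↦ ?_
  rw [integral_finsetSum _ (hint q hq)]
  exact sum_eq_single_of_mem q hq fun r hr hrq ↦ horth hq hr hrq.symm

lemma integral_norm_sub_integral_sq [CompleteSpace E] [IsProbabilityMeasure μ] {X : Ω → E}
    (hX : MemLp X 2 μ) :
    ∫ ω, ‖X ω - ∫ ω', X ω' ∂μ‖ ^ 2 ∂μ = ∫ ω, ‖X ω‖ ^ 2 ∂μ - ‖∫ ω, X ω ∂μ‖ ^ 2 := by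
  set u := ∫ ω, X ω ∂μ with hu
  have hX1 : Integrable X μ := hX.integrable one_le_two
  have hX2 : Integrable (fun ω ↦ ‖X ω‖ ^ 2) μ := hX.integrable_norm_pow two_ne_zero
  have hXu : Integrable (fun ω ↦ 2 * inner ℝ u (X ω)) μ := (hX1.const_inner u).const_mul 2
  have hdiff : Integrable (fun ω ↦ ‖X ω‖ ^ 2 - 2 * inner ℝ u (X ω)) μ := hX2.sub hXu
  simp_rw [norm_sub_sq_real, real_inner_comm u]
  rw [integral_add hdiff (integrable_const _), integral_sub hX2 hXu, integral_const_mul,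
    integral_inner hX1, ← hu, real_inner_self_eq_norm_sq, integral_const, probReal_univ, one_smul]
  ring

variable [MeasurableSpace E] [BorelSpace E]

lemma integral_inner_sub_integral_eq_zero_of_indepFun [CompleteSpace E] [IsProbabilityMeasure μ]
    {X Y : Ω → E} (hXY : IndepFun X Y μ) (hX : Integrable X μ) (hY : Integrable Y μ) :
    ∫ ω, inner ℝ (X ω - ∫ ω', X ω' ∂μ) (Y ω - ∫ ω', Y ω' ∂μ) ∂μ = 0 := by
  set u := ∫ ω, X ω ∂μ with hu
  set v := ∫ ω, Y ω ∂μ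
  have hindep : IndepFun (fun ω ↦ X ω - u) (fun ω ↦ Y ω - v) μ :=
    hXY.comp (φ := (· - u)) (ψ := (· - v)) (by fun_prop) (by fun_prop)
  have hcentered : ∫ ω, (X ω - u) ∂μ = 0 := by
    rw [integral_sub hX (integrable_const _), ← hu, integral_const, probReal_univ, one_smul,
      sub_self]
  calc ∫ ω, inner ℝ (X ω - u) (Y ω - v) ∂μ
      = inner ℝ (∫ ω, (X ω - u) ∂μ) (∫ ω, (Y ω - v) ∂μ) :=
        hindep.integral_bilin (hX.sub (integrable_const u)) (hY.sub (integrable_const v))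
          (innerSL ℝ)
    _ = 0 := by rw [hcentered, inner_zero_left]

lemma integral_norm_sq_smul_of_indepFun {B : Ω → ℝ} {X : Ω → E} (hBX : IndepFun B X μ)
    (hB : AEMeasurable B μ) (hX : AEStronglyMeasurable X μ) :
    ∫ ω, ‖B ω • X ω‖ ^ 2 ∂μ = (∫ ω, B ω ^ 2 ∂μ) * ∫ ω, ‖X ω‖ ^ 2 ∂μ := by
  have hsq : IndepFun (fun ω ↦ B ω ^ 2) (fun ω ↦ ‖X ω‖ ^ 2) μ :=
    hBX.comp (φ := (· ^ 2)) (ψ := (‖·‖ ^ 2)) (by fun_prop) (by fun_prop)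
  simp_rw [norm_smul, mul_pow, Real.norm_eq_abs, sq_abs]
  exact hsq.integral_fun_mul_eq_mul_integral (hB.pow_const 2).aestronglyMeasurable (hX.norm.pow 2)

end SecondMoments

section Masks

variable {Ω E : Type*} [MeasurableSpace Ω] {μ : Measure Ω} {B : Ω → ℝ} {X : Ω → E}
  [NormedAddCommGroup E]

lemma integral_eq_measureReal_of_ae_zero_or_one (hB : AEMeasurable B μ)
    (hB01 : ∀ᵐ ω ∂μ, B ω = 0 ∨ B ω = 1) : ∫ ω, B ω ∂μ = μ.real {ω | B ω = 1} := by
  have hind : B =ᵐ[μ] {ω | B ω = 1}.indicator 1 := by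
    filter_upwards [hB01] with ω h
    rcases h with h | h <;> simp [h]
  have hmeas : NullMeasurableSet {ω | B ω = 1} μ :=
    hB.nullMeasurableSet_preimage (measurableSet_singleton 1)
  rw [integral_congr_ae hind, integral_indicator₀ hmeas]
  simp

lemma memLp_smul_of_ae_mem_Icc [NormedSpace ℝ E] [IsFiniteMeasure μ] {a b : ℝ} {p : ENNReal}
    (hB : AEMeasurable B μ) (hBab : ∀ᵐ ω ∂μ, B ω ∈ Set.Icc a b) (hX : MemLp X p μ) :
    MemLp (fun ω ↦ B ω • X ω) p μ :=
  hX.smul (memLp_of_bounded hBab hB.aestronglyMeasurable ⊤)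

variable [InnerProductSpace ℝ E] [CompleteSpace E] [MeasurableSpace E] [BorelSpace E]
  [IsProbabilityMeasure μ]

lemma integral_norm_smul_sub_sq_le (hB : AEMeasurable B μ)
    (hB01 : ∀ᵐ ω ∂μ, B ω ∈ Set.Icc (0 : ℝ) 1) (hX : MemLp X 2 μ) (hBX : IndepFun B X μ) :
    ∫ ω, ‖B ω • X ω - (∫ ω', B ω' ∂μ) • ∫ ω', X ω' ∂μ‖ ^ 2 ∂μ ≤
      (∫ ω, B ω ∂μ) * (∫ ω, ‖X ω - ∫ ω', X ω' ∂μ‖ ^ 2 ∂μ +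
        (1 - ∫ ω, B ω ∂μ) * ‖∫ ω, X ω ∂μ‖ ^ 2) := by
  have hB2 : MemLp B 2 μ := memLp_of_bounded hB01 hB.aestronglyMeasurable 2
  have hBX2 : MemLp (fun ω ↦ B ω • X ω) 2 μ := memLp_smul_of_ae_mem_Icc hB hB01 hX
  have hmean : ∫ ω, B ω • X ω ∂μ = (∫ ω, B ω ∂μ) • ∫ ω, X ω ∂μ :=
    hBX.integral_fun_smul_eq_smul_integral hB.aestronglyMeasurable hX.aestronglyMeasurable
  have hBsq : ∫ ω, B ω ^ 2 ∂μ ≤ ∫ ω, B ω ∂μ :=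
    integral_mono_ae hB2.integrable_sq (hB2.integrable one_le_two) <|
      hB01.mono fun ω h ↦ pow_le_of_le_one h.1 h.2 two_ne_zero
  calc ∫ ω, ‖B ω • X ω - (∫ ω', B ω' ∂μ) • ∫ ω', X ω' ∂μ‖ ^ 2 ∂μ
      = (∫ ω, B ω ^ 2 ∂μ) * ∫ ω, ‖X ω‖ ^ 2 ∂μ - (∫ ω, B ω ∂μ) ^ 2 * ‖∫ ω, X ω ∂μ‖ ^ 2 := by
        rw [← hmean, integral_norm_sub_integral_sq hBX2, hmean,
          integral_norm_sq_smul_of_indepFun hBX hB hX.aestronglyMeasurable, norm_smul, mul_pow,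
          Real.norm_eq_abs, sq_abs]
    _ ≤ (∫ ω, B ω ∂μ) * ∫ ω, ‖X ω‖ ^ 2 ∂μ - (∫ ω, B ω ∂μ) ^ 2 * ‖∫ ω, X ω ∂μ‖ ^ 2 := by
        gcongr
    _ = _ := by
        rw [integral_norm_sub_integral_sq hX]
        ring

lemma integral_norm_smul_sub_sq_le_of_le {v G : ℝ} (hB : AEMeasurable B μ)
    (hB01 : ∀ᵐ ω ∂μ, B ω ∈ Set.Icc (0 : ℝ) 1) (hX : MemLp X 2 μ) (hBX : IndepFun B X μ)
    (hv : ∫ ω, ‖X ω - ∫ ω', X ω' ∂μ‖ ^ 2 ∂μ ≤ v) (hG : ‖∫ ω, X ω ∂μ‖ ≤ G) :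
    ∫ ω, ‖B ω • X ω - (∫ ω', B ω' ∂μ) • ∫ ω', X ω' ∂μ‖ ^ 2 ∂μ ≤
      (∫ ω, B ω ∂μ) * (v + (1 - ∫ ω, B ω ∂μ) * G ^ 2) := by
  have hBint : Integrable B μ :=
    memLp_one_iff_integrable.1 (memLp_of_bounded hB01 hB.aestronglyMeasurable 1)
  obtain ⟨hp0, hp1⟩ : ∫ ω, B ω ∂μ ∈ Set.Icc (0 : ℝ) 1 :=
    (convex_Icc 0 1).integral_mem isClosed_Icc hB01 hBint
  refine (integral_norm_smul_sub_sq_le hB hB01 hX hBX).trans ?_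
  gcongr

end Masks

section ClusterWeights

variable {U C : Type*} [DecidableEq C]

/-- The coefficient of user `m` in the difference between the average over cluster `i` (with weights
`αc`) and the average over all users (with weights `α`). -/
def clusterDeviationWeight (c : U → C) (αc α : U → ℝ) (i : C) (m : U) : ℝ :=
  (if c m = i then αc m else 0) - α m

lemma sum_cluster_smul_sub_sum_smul [Fintype U] {E : Type*} [AddCommGroup E] [Module ℝ E]
    (c : U → C) (αc α : U → ℝ) (i : C) (y : U → E) :
    ∑ m with c m = i, αc m • y m - ∑ m, α m • y m =
      ∑ m, clusterDeviationWeight c αc α i m • y m := by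
  simp only [clusterDeviationWeight, sub_smul, ite_smul, zero_smul, sum_sub_distrib, sum_filter]

lemma sum_mul_clusterDeviationWeight_sq [Fintype C] {c : U → C} {αc α : U → ℝ} {αC : C → ℝ}
    (hαC : ∑ i, αC i = 1) (m : U) (hα : α m = αc m * αC (c m)) :
    ∑ i, αC i * clusterDeviationWeight c αc α i m ^ 2 = α m * (αc m - α m) := by
  have hsplit : ∀ i, αC i * clusterDeviationWeight c αc α i m ^ 2 =
      (if c m = i then αC i * (αc m ^ 2 - 2 * αc m * α m) else 0) + αC i * α m ^ 2 := by
    intro i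
    rw [clusterDeviationWeight]
    split_ifs <;> ring
  simp_rw [hsplit, sum_add_distrib, sum_ite_eq, ← sum_mul, hαC, mem_univ, if_true, hα]
  ring

end ClusterWeights

section ClusterSums

variable {U C T Ω E : Type*} [Fintype U] [Fintype T] [DecidableEq C]
  {c : U → C} {αc α : U → ℝ} {αC : C → ℝ} [MeasurableSpace Ω] {μ : Measure Ω}
  [NormedAddCommGroup E] [InnerProductSpace ℝ E]

lemma integral_norm_sq_cluster_sub_global {Y : U → T → Ω → E} (hY : ∀ m τ, MemLp (Y m τ) 2 μ)
    (horth : Pairwise fun q r : U × T ↦ ∫ ω, inner ℝ (Y q.1 q.2 ω) (Y r.1 r.2 ω) ∂μ = 0) (i : C) :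
    ∫ ω, ‖∑ τ, (∑ m with c m = i, αc m • Y m τ ω - ∑ m, α m • Y m τ ω)‖ ^ 2 ∂μ =
      ∑ m, clusterDeviationWeight c αc α i m ^ 2 * ∑ τ, ∫ ω, ‖Y m τ ω‖ ^ 2 ∂μ := by
  set w := clusterDeviationWeight c αc α i with hw
  have hpairs : ∀ ω, ∑ τ, (∑ m with c m = i, αc m • Y m τ ω - ∑ m, α m • Y m τ ω) =
      ∑ q : U × T, w q.1 • Y q.1 q.2 ω := fun ω ↦ by
    simp_rw [sum_cluster_smul_sub_sum_smul, Fintype.sum_prod_type_right, hw]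
  have hwY : ∀ q ∈ (univ : Finset (U × T)), MemLp (fun ω ↦ w q.1 • Y q.1 q.2 ω) 2 μ :=
    fun q _ ↦ (hY q.1 q.2).const_smul (w q.1)
  simp_rw [hpairs]
  rw [integral_norm_sq_sum_of_pairwise_orthogonal hwY fun q _ r _ hqr ↦ by
    simp_rw [real_inner_smul_left, real_inner_smul_right, integral_const_mul, horth hqr, mul_zero]]
  simp_rw [norm_smul, mul_pow, Real.norm_eq_abs, sq_abs, integral_const_mul,
    Fintype.sum_prod_type, mul_sum]

variable [Fintype C]

lemma sum_mul_integral_norm_sq_cluster_sub_global (hαC : ∑ i, αC i = 1)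
    (hα : ∀ m, α m = αc m * αC (c m)) {Y : U → T → Ω → E} (hY : ∀ m τ, MemLp (Y m τ) 2 μ)
    (horth : Pairwise fun q r : U × T ↦ ∫ ω, inner ℝ (Y q.1 q.2 ω) (Y r.1 r.2 ω) ∂μ = 0) :
    ∑ i, αC i * ∫ ω, ‖∑ τ, (∑ m with c m = i, αc m • Y m τ ω - ∑ m, α m • Y m τ ω)‖ ^ 2 ∂μ =
      ∑ m, α m * (αc m - α m) * ∑ τ, ∫ ω, ‖Y m τ ω‖ ^ 2 ∂μ := by
  simp_rw [integral_norm_sq_cluster_sub_global hY horth, mul_sum (s := univ (α := U)), ← mul_assoc]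
  rw [sum_comm]
  simp_rw [← sum_mul, sum_mul_clusterDeviationWeight_sq hαC _ (hα _)]

lemma sum_mul_integral_norm_sq_cluster_sub_global_le (hαC0 : ∀ i, 0 ≤ αC i)
    (hαC : ∑ i, αC i = 1) (hα : ∀ m, α m = αc m * αC (c m)) {Y : U → T → Ω → E} {V : ℝ}
    (hY : ∀ m τ, MemLp (Y m τ) 2 μ)
    (horth : Pairwise fun q r : U × T ↦ ∫ ω, inner ℝ (Y q.1 q.2 ω) (Y r.1 r.2 ω) ∂μ = 0)
    (hV : ∀ m τ, ∫ ω, ‖Y m τ ω‖ ^ 2 ∂μ ≤ V) :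
    ∑ i, αC i * ∫ ω, ‖∑ τ, (∑ m with c m = i, αc m • Y m τ ω - ∑ m, α m • Y m τ ω)‖ ^ 2 ∂μ ≤
      Fintype.card T * V * ∑ m, α m * (αc m - α m) := by
  have hweight : ∀ m, 0 ≤ α m * (αc m - α m) := fun m ↦ by
    rw [← sum_mul_clusterDeviationWeight_sq hαC m (hα m)]
    exact sum_nonneg fun i _ ↦ mul_nonneg (hαC0 i) (sq_nonneg _)
  have hsum : ∀ m, ∑ τ, ∫ ω, ‖Y m τ ω‖ ^ 2 ∂μ ≤ Fintype.card T * V := fun m ↦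
    (sum_le_card_nsmul univ _ V fun τ _ ↦ hV m τ).trans_eq <| by rw [card_univ, nsmul_eq_mul]
  rw [sum_mul_integral_norm_sq_cluster_sub_global hαC hα hY horth, mul_comm, sum_mul]
  exact sum_le_sum fun m _ ↦ mul_le_mul_of_nonneg_left (hsum m) (hweight m)

theorem cluster_vs_global_centered_sum_bound_general
    [CompleteSpace E] [SecondCountableTopology E] [MeasurableSpace E] [BorelSpace E]
    [IsProbabilityMeasure μ]
    (hαC0 : ∀ i, 0 ≤ αC i) (hαCsum : ∑ i, αC i = 1) (hα : ∀ m, α m = αc m * αC (c m))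
    {X : U → T → Ω → E} {B : U → T → Ω → ℝ} {μs : U → T → E} {σ G p : ℝ}
    (hμsG : ∀ m τ, ‖μs m τ‖ ≤ G)
    (hXsq : ∀ m τ, MemLp (X m τ) 2 μ)
    (hXmean : ∀ m τ, ∫ ω, X m τ ω ∂μ = μs m τ)
    (hXvar : ∀ m τ, ∫ ω, ‖X m τ ω - μs m τ‖ ^ 2 ∂μ ≤ σ ^ 2)
    (hB01 : ∀ m τ, ∀ᵐ ω ∂μ, B m τ ω ∈ Set.Icc (0 : ℝ) 1)
    (hBmeas : ∀ m τ, AEMeasurable (B m τ) μ)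
    (hBmean : ∀ m τ, ∫ ω, B m τ ω ∂μ = p)
    (hpairs : Pairwise fun q r : U × T ↦
      IndepFun (fun ω ↦ (X q.1 q.2 ω, B q.1 q.2 ω)) (fun ω ↦ (X r.1 r.2 ω, B r.1 r.2 ω)) μ)
    (hBX : ∀ m τ, IndepFun (B m τ) (X m τ) μ) :
    ∑ i, αC i * ∫ ω, ‖∑ τ, (∑ m with c m = i, αc m • (B m τ ω • X m τ ω - p • μs m τ) -
        ∑ m, α m • (B m τ ω • X m τ ω - p • μs m τ))‖ ^ 2 ∂μ ≤
      Fintype.card T * p * (σ ^ 2 + (1 - p) * G ^ 2) * ∑ m, α m * (αc m - α m) := by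
  have hZ : ∀ m τ, MemLp (fun ω ↦ B m τ ω • X m τ ω) 2 μ := fun m τ ↦
    memLp_smul_of_ae_mem_Icc (hBmeas m τ) (hB01 m τ) (hXsq m τ)
  have hZmean : ∀ m τ, ∫ ω, B m τ ω • X m τ ω ∂μ = p • μs m τ := fun m τ ↦ by
    rw [(hBX m τ).integral_fun_smul_eq_smul_integral (hBmeas m τ).aestronglyMeasurable
      (hXsq m τ).aestronglyMeasurable, hBmean, hXmean]
  have horth : Pairwise fun q r : U × T ↦ ∫ ω, inner ℝ
      (B q.1 q.2 ω • X q.1 q.2 ω - p • μs q.1 q.2)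
      (B r.1 r.2 ω • X r.1 r.2 ω - p • μs r.1 r.2) ∂μ = 0 := fun q r hqr ↦ by
    have hmask : Measurable fun z : E × ℝ ↦ z.2 • z.1 := by fun_prop
    have hindep : IndepFun (fun ω ↦ B q.1 q.2 ω • X q.1 q.2 ω)
      (fun ω ↦ B r.1 r.2 ω • X r.1 r.2 ω) μ := (hpairs hqr).comp hmask hmask
    simpa only [hZmean] using integral_inner_sub_integral_eq_zero_of_indepFun hindep
      ((hZ _ _).integrable one_le_two) ((hZ _ _).integrable one_le_two)
  have hvar : ∀ m τ, ∫ ω, ‖B m τ ω • X m τ ω - p • μs m τ‖ ^ 2 ∂μ ≤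
      p * (σ ^ 2 + (1 - p) * G ^ 2) := fun m τ ↦ by
    have hσ := hXvar m τ
    have hG := hμsG m τ
    rw [← hXmean] at hσ hG
    simpa only [hBmean, hXmean] using
      integral_norm_smul_sub_sq_le_of_le (hBmeas m τ) (hB01 m τ) (hXsq m τ) (hBX m τ) hσ hG
  calc _ ≤ Fintype.card T * (p * (σ ^ 2 + (1 - p) * G ^ 2)) * ∑ m, α m * (αc m - α m) :=
        sum_mul_integral_norm_sq_cluster_sub_global_le hαC0 hαCsum hα
          (fun m τ ↦ (hZ m τ).sub (memLp_const _)) horth hvar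
    _ = _ := by ring

end ClusterSums

/-- For independent pairs `(X m τ, B m τ)` with `E[X m τ] = μs m τ`,
`‖μs m τ‖ ≤ G`, variance at most `σ²`, and `B m τ` Bernoulli(p) independent of `X m τ`,
the weighted mean-square deviation of the centered indicator-weighted `κ`-step sums of the
cluster averages from the global averages is at most
`κ p (σ² + (1 − p) G²) Σ_m α_m (α^c_m − α_m)`. -/
theorem cluster_vs_global_centered_sum_bound
    {d M N κ : ℕ} (hκ : 1 ≤ κ) (c : Fin M → Fin N)
    (αc : Fin M → ℝ) (αC : Fin N → ℝ) (α : Fin M → ℝ)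
    (hαc01 : ∀ m, αc m ∈ Set.Icc (0 : ℝ) 1)
    (hαcsum : ∀ i, ∑ m ∈ univ.filter (fun m => c m = i), αc m = 1)
    (hαC01 : ∀ i, αC i ∈ Set.Icc (0 : ℝ) 1)
    (hαCsum : ∑ i, αC i = 1)
    (hα : ∀ m, α m = αc m * αC (c m))
    {Ω : Type*} [MeasurableSpace Ω] {μ : Measure Ω} [IsProbabilityMeasure μ]
    (X : Fin M → Fin κ → Ω → EuclideanSpace ℝ (Fin d))
    (B : Fin M → Fin κ → Ω → ℝ)
    (μs : Fin M → Fin κ → EuclideanSpace ℝ (Fin d))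
    (σ G p : ℝ) (hp0 : 0 ≤ p) (hp1 : p ≤ 1)
    (hμsG : ∀ m τ, ‖μs m τ‖ ≤ G)
    (hXsq : ∀ m τ, MemLp (X m τ) 2 μ)
    (hXmean : ∀ m τ, ∫ ω, X m τ ω ∂μ = μs m τ)
    (hXvar : ∀ m τ, ∫ ω, ‖X m τ ω - μs m τ‖ ^ 2 ∂μ ≤ σ ^ 2)
    (hB01 : ∀ m τ ω, B m τ ω = 0 ∨ B m τ ω = 1)
    (hBmeas : ∀ m τ, Measurable (B m τ))
    (hBp : ∀ m τ, μ {ω | B m τ ω = 1} = ENNReal.ofReal p)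
    (hpairs : iIndepFun
      (fun q : Fin M × Fin κ => fun ω => (X q.1 q.2 ω, B q.1 q.2 ω)) μ)
    (hBX : ∀ m τ, IndepFun (B m τ) (X m τ) μ) :
    ∑ i, αC i *
        ∫ ω, ‖∑ τ, ((∑ m ∈ univ.filter (fun m => c m = i),
              αc m • (B m τ ω • X m τ ω - p • μs m τ)) -
            ∑ m, α m • (B m τ ω • X m τ ω - p • μs m τ))‖ ^ 2 ∂μ ≤
      (κ : ℝ) * p * (σ ^ 2 + (1 - p) * G ^ 2) * ∑ m, α m * (αc m - α m) := by
  have hB01' : ∀ m τ, ∀ᵐ ω ∂μ, B m τ ω ∈ Set.Icc (0 : ℝ) 1 := fun m τ ↦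
    .of_forall fun ω ↦ by rcases hB01 m τ ω with h | h <;> simp [h]
  have hBmean : ∀ m τ, ∫ ω, B m τ ω ∂μ = p := fun m τ ↦ by
    rw [integral_eq_measureReal_of_ae_zero_or_one (hBmeas m τ).aemeasurable
      (.of_forall (hB01 m τ)), measureReal_def, hBp, ENNReal.toReal_ofReal hp0]
  simpa only [Fintype.card_fin] using cluster_vs_global_centered_sum_bound_general
    (fun i ↦ (hαC01 i).1) hαCsum hα hμsG hXsq hXmean hXvar hB01'
    (fun m τ ↦ (hBmeas m τ).aemeasurable) hBmean (fun _ _ ↦ hpairs.indepFun) hBX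
end

section
/- Let f_{c_1}, …, f_{c_N} : ℝ^d → ℝ be differentiable functions with L-Lipschitz gradients, let α_{c_1}, …, α_{c_N} ∈ [0,1] with Σ_i α_{c_i} = 1, set f := Σ_i α_{c_i} f_{c_i}, and suppose for every w ∈ ℝ^d: Σ_{i=1}^{N} α_{c_i}‖∇f_{c_i}(w) − ∇f(w)‖² ≤ ε_g². Then for any integer κ ≥ 1 and any points u_i^τ, v^τ ∈ ℝ^d (1 ≤ i ≤ N, 0 ≤ τ < κ): Σ_{i=1}^{N} α_{c_i} ‖ Σ_{τ=0}^{κ−1} ( ∇f_{c_i}(u_i^τ) − Σ_{j=1}^{N} α_{c_j} ∇f_{c_j}(u_j^τ) ) ‖² ≤ 6 κ L² Σ_{i=1}^{N} Σ_{τ=0}^{κ−1} α_{c_i} ‖ u_i^τ − v^τ ‖² + 3 κ² ε_g². -/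
open Finset

/-! The weighted mean of finitely many points minimizes the weighted sum of squared distances to
them, so the averages `∑ j, αC j • gradient (fc j) (u j τ)` may be replaced by `gradient f (v τ)`.
Cauchy–Schwarz takes the sum over `τ` out of the norm at the cost of a factor `κ`, and it remains to
split each difference at `gradient (fc i) (v τ)`. Minimality of the mean spares a third summand in
this splitting, whence constants `2` and `2` instead of `6` and `3`. -/

section

open scoped NNReal

variable {ι σ E F : Type*}

lemma sq_norm_sum_le_card_mul_sum_sq_norm [SeminormedAddCommGroup F] (T : Finset σ) (a : σ → F) :
    ‖∑ τ ∈ T, a τ‖ ^ 2 ≤ #T * ∑ τ ∈ T, ‖a τ‖ ^ 2 :=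
  calc ‖∑ τ ∈ T, a τ‖ ^ 2 ≤ (∑ τ ∈ T, ‖a τ‖) ^ 2 := by gcongr; exact norm_sum_le _ _
    _ ≤ #T * ∑ τ ∈ T, ‖a τ‖ ^ 2 := sq_sum_le_card_mul_sum_sq

lemma sq_norm_map_sub_le_of_lipschitzWith [PseudoMetricSpace E] [SeminormedAddCommGroup F]
    {G : E → F} {K : ℝ≥0} (hG : LipschitzWith K G) (x y : E) (c : F) :
    ‖G x - c‖ ^ 2 ≤ 2 * (K ^ 2 * dist x y ^ 2 + ‖G y - c‖ ^ 2) :=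
  calc ‖G x - c‖ ^ 2 ≤ (‖G x - G y‖ + ‖G y - c‖) ^ 2 := by
        gcongr; exact norm_sub_le_norm_sub_add_norm_sub _ _ _
    _ ≤ 2 * (‖G x - G y‖ ^ 2 + ‖G y - c‖ ^ 2) := add_sq_le
    _ ≤ 2 * ((K * dist x y) ^ 2 + ‖G y - c‖ ^ 2) := by
        gcongr; exact (dist_eq_norm (G x) (G y)).symm.trans_le (hG.dist_le_mul x y)
    _ = 2 * (K ^ 2 * dist x y ^ 2 + ‖G y - c‖ ^ 2) := by rw [mul_pow]

variable {s : Finset ι} {w : ι → ℝ}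

lemma sum_mul_sq_norm_map_sub_le_of_lipschitzWith [PseudoMetricSpace E] [SeminormedAddCommGroup F]
    (hw : ∀ i ∈ s, 0 ≤ w i) {G : ι → E → F} {K : ℝ≥0} (hG : ∀ i ∈ s, LipschitzWith K (G i))
    (x : ι → E) (y : E) (c : F) :
    ∑ i ∈ s, w i * ‖G i (x i) - c‖ ^ 2 ≤
      2 * K ^ 2 * ∑ i ∈ s, w i * dist (x i) y ^ 2 + 2 * ∑ i ∈ s, w i * ‖G i y - c‖ ^ 2 :=
  calc ∑ i ∈ s, w i * ‖G i (x i) - c‖ ^ 2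
      ≤ ∑ i ∈ s, w i * (2 * (K ^ 2 * dist (x i) y ^ 2 + ‖G i y - c‖ ^ 2)) :=
        sum_le_sum fun i hi ↦ mul_le_mul_of_nonneg_left
          (sq_norm_map_sub_le_of_lipschitzWith (hG i hi) (x i) y c) (hw i hi)
    _ = 2 * K ^ 2 * ∑ i ∈ s, w i * dist (x i) y ^ 2 + 2 * ∑ i ∈ s, w i * ‖G i y - c‖ ^ 2 := by
        simp only [mul_sum, ← sum_add_distrib]
        exact sum_congr rfl fun i _ ↦ by ring

section InnerProductSpace

variable [SeminormedAddCommGroup F] [InnerProductSpace ℝ F]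

lemma sum_mul_sq_norm_sub_eq_sum_mul_sq_norm_sub_mean_add (hw₁ : ∑ i ∈ s, w i = 1) (y : ι → F)
    (c : F) :
    ∑ i ∈ s, w i * ‖y i - c‖ ^ 2 =
      ∑ i ∈ s, w i * ‖y i - ∑ j ∈ s, w j • y j‖ ^ 2 + ‖∑ j ∈ s, w j • y j - c‖ ^ 2 := by
  set m := ∑ j ∈ s, w j • y j with hm
  have deviations_sum_zero : ∑ i ∈ s, w i • (y i - m) = 0 := by
    simp only [smul_sub, sum_sub_distrib, ← sum_smul, hw₁, one_smul, ← hm, sub_self]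
  have cross_term : ∑ i ∈ s, w i * inner ℝ (y i - m) (m - c) = 0 := by
    simp only [← real_inner_smul_left, ← sum_inner, deviations_sum_zero, inner_zero_left]
  calc ∑ i ∈ s, w i * ‖y i - c‖ ^ 2
      = ∑ i ∈ s, (w i * ‖y i - m‖ ^ 2 + 2 * (w i * inner ℝ (y i - m) (m - c))
          + w i * ‖m - c‖ ^ 2) :=
        sum_congr rfl fun i _ ↦ by
          rw [← sub_add_sub_cancel (y i) m c, norm_add_sq_real]
          ring
    _ = ∑ i ∈ s, w i * ‖y i - m‖ ^ 2 + ‖m - c‖ ^ 2 := by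
        simp only [sum_add_distrib, ← mul_sum, ← sum_mul, cross_term, hw₁, mul_zero, add_zero,
          one_mul]

lemma sum_mul_sq_norm_sub_mean_le (hw₁ : ∑ i ∈ s, w i = 1) (y : ι → F) (c : F) :
    ∑ i ∈ s, w i * ‖y i - ∑ j ∈ s, w j • y j‖ ^ 2 ≤ ∑ i ∈ s, w i * ‖y i - c‖ ^ 2 := by
  rw [sum_mul_sq_norm_sub_eq_sum_mul_sq_norm_sub_mean_add hw₁ y c]
  exact le_add_of_nonneg_right (sq_nonneg _)

lemma sum_mul_sq_norm_sum_sub_mean_le (hw : ∀ i ∈ s, 0 ≤ w i) (hw₁ : ∑ i ∈ s, w i = 1)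
    (T : Finset σ) (y : ι → σ → F) (c : σ → F) :
    ∑ i ∈ s, w i * ‖∑ τ ∈ T, (y i τ - ∑ j ∈ s, w j • y j τ)‖ ^ 2 ≤
      #T * ∑ τ ∈ T, ∑ i ∈ s, w i * ‖y i τ - c τ‖ ^ 2 :=
  calc ∑ i ∈ s, w i * ‖∑ τ ∈ T, (y i τ - ∑ j ∈ s, w j • y j τ)‖ ^ 2
      = ∑ i ∈ s, w i * ‖∑ τ ∈ T, y i τ - ∑ j ∈ s, w j • ∑ τ ∈ T, y j τ‖ ^ 2 := by
        simp only [sum_sub_distrib, smul_sum, sum_comm (s := T)]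
    _ ≤ ∑ i ∈ s, w i * ‖∑ τ ∈ T, y i τ - ∑ τ ∈ T, c τ‖ ^ 2 :=
        sum_mul_sq_norm_sub_mean_le hw₁ _ _
    _ ≤ ∑ i ∈ s, w i * (#T * ∑ τ ∈ T, ‖y i τ - c τ‖ ^ 2) :=
        sum_le_sum fun i hi ↦ mul_le_mul_of_nonneg_left
          (by simpa only [sum_sub_distrib] using
            sq_norm_sum_le_card_mul_sum_sq_norm T fun τ ↦ y i τ - c τ) (hw i hi)
    _ = #T * ∑ τ ∈ T, ∑ i ∈ s, w i * ‖y i τ - c τ‖ ^ 2 := by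
        simp only [sum_comm (s := T), mul_sum, mul_left_comm]

theorem cluster_gradient_drift_bound_general [PseudoMetricSpace E] (hw : ∀ i ∈ s, 0 ≤ w i)
    (hw₁ : ∑ i ∈ s, w i = 1) {G : ι → E → F} {K : ℝ≥0} (hG : ∀ i ∈ s, LipschitzWith K (G i))
    (T : Finset σ) (u : ι → σ → E) (v : σ → E) (c : σ → F) {δ : ℝ}
    (hδ : ∀ τ ∈ T, ∑ i ∈ s, w i * ‖G i (v τ) - c τ‖ ^ 2 ≤ δ) :
    ∑ i ∈ s, w i * ‖∑ τ ∈ T, (G i (u i τ) - ∑ j ∈ s, w j • G j (u j τ))‖ ^ 2 ≤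
      2 * #T * K ^ 2 * ∑ i ∈ s, ∑ τ ∈ T, w i * dist (u i τ) (v τ) ^ 2 + 2 * #T ^ 2 * δ :=
  calc ∑ i ∈ s, w i * ‖∑ τ ∈ T, (G i (u i τ) - ∑ j ∈ s, w j • G j (u j τ))‖ ^ 2
      ≤ #T * ∑ τ ∈ T, ∑ i ∈ s, w i * ‖G i (u i τ) - c τ‖ ^ 2 :=
        sum_mul_sq_norm_sum_sub_mean_le hw hw₁ T (fun i τ ↦ G i (u i τ)) c
    _ ≤ #T * ∑ τ ∈ T, (2 * K ^ 2 * ∑ i ∈ s, w i * dist (u i τ) (v τ) ^ 2 + 2 * δ) := by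
        gcongr with τ hτ
        refine (sum_mul_sq_norm_map_sub_le_of_lipschitzWith hw hG _ (v τ) (c τ)).trans ?_
        gcongr
        exact hδ τ hτ
    _ = 2 * #T * K ^ 2 * ∑ i ∈ s, ∑ τ ∈ T, w i * dist (u i τ) (v τ) ^ 2 + 2 * #T ^ 2 * δ := by
        rw [sum_add_distrib, ← mul_sum, sum_comm, sum_const, nsmul_eq_mul]
        ring

end InnerProductSpace

end

/-- Accumulated deviation of cluster gradients from their global weighted
average over `κ` steps is controlled by `6 κ L²` times the accumulated squared distances of
the cluster points to arbitrary reference points plus `3 κ² ε_g²`. -/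
theorem cluster_gradient_drift_bound
    {d N : ℕ}
    (fc : Fin N → EuclideanSpace ℝ (Fin d) → ℝ)
    (αC : Fin N → ℝ)
    (hαC01 : ∀ i, αC i ∈ Set.Icc (0 : ℝ) 1)
    (hαCsum : ∑ i, αC i = 1)
    (f : EuclideanSpace ℝ (Fin d) → ℝ)
    (hf : ∀ x, f x = ∑ i, αC i * fc i x)
    (hfcdiff : ∀ i, Differentiable ℝ (fc i))
    (L εg : ℝ) (hL : 0 < L)
    (hLip : ∀ i, LipschitzWith L.toNNReal (gradient (fc i)))
    (hdivg : ∀ x, ∑ i, αC i * ‖gradient (fc i) x - gradient f x‖ ^ 2 ≤ εg ^ 2)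
    (κ : ℕ) (hκ : 1 ≤ κ)
    (u : Fin N → ℕ → EuclideanSpace ℝ (Fin d))
    (v : ℕ → EuclideanSpace ℝ (Fin d)) :
    ∑ i, αC i * ‖∑ τ ∈ range κ, (gradient (fc i) (u i τ) -
        ∑ j, αC j • gradient (fc j) (u j τ))‖ ^ 2 ≤
      6 * κ * L ^ 2 * ∑ i, ∑ τ ∈ range κ, αC i * ‖u i τ - v τ‖ ^ 2 +
        3 * (κ : ℝ) ^ 2 * εg ^ 2 := by
  have hα i : 0 ≤ αC i := (hαC01 i).1
  have hdrift := cluster_gradient_drift_bound_general (fun i _ ↦ hα i) hαCsum (fun i _ ↦ hLip i)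
    (range κ) u v (fun τ ↦ gradient f (v τ)) fun τ _ ↦ hdivg (v τ)
  simp only [card_range, Real.coe_toNNReal L hL.le, dist_eq_norm] at hdrift
  have hdist : 0 ≤ ∑ i, ∑ τ ∈ range κ, αC i * ‖u i τ - v τ‖ ^ 2 :=
    sum_nonneg fun i _ ↦ sum_nonneg fun τ _ ↦ mul_nonneg (hα i) (sq_nonneg _)
  exact hdrift.trans (by gcongr <;> norm_num)
end
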